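/- For every nonzero integer n, the maps aⁿ and bⁿ do not commute: aⁿbⁿ ≠ bⁿaⁿ as homeomorphisms of [0,1]. -/

import Mathlib

/-!
The map `b` has support the open interval `(1/2, 7/8)`, while `a` sends `1/2` to `7/8` and is
increasing, so positive powers of `a` push that interval off itself. Concretely, for `k ≥ 1` the
point `5/8` is moved by `b ^ k`, as `b (5/8) = 3/4` and `b` preserves `[3/4, 7/8]`, whereas
`(a ^ k) (5/8)` lies in `[7/8, 1]`, where `b` is the identity. A map commuting with `b ^ k` sends
moved points of `b ^ k` to moved points, so `a ^ k` and `b ^ k` do not commute. Negative exponents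
reduce to positive ones by taking inverses.
-/

noncomputable section
set_option maxHeartbeats 2000000


/-- The underlying function of Thompson's generator `x₀`, extended by the
identity outside `[0,1]`. -/
def x0fun : ℝ → ℝ := fun α =>
  if α < 0 then α
  else if α ≤ 1/4 then 2*α
  else if α ≤ 1/2 then α + 1/4
  else if α ≤ 1 then α/2 + 1/2
  else α

/-- The inverse of `x0fun`. -/
def x0inv : ℝ → ℝ := fun α =>
  if α < 0 then α
  else if α ≤ 1/2 then α/2
  else if α ≤ 3/4 then α - 1/4
  else if α ≤ 1 then 2*α - 1
  else α

/-- Thompson's generator `x₀`, as a permutation of `ℝ` which is the identity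
outside `[0,1]`:  `x₀ α = 2α` on `[0,1/4]`, `α + 1/4` on `[1/4,1/2]`,
`α/2 + 1/2` on `[1/2,1]`. -/
def x₀ : Equiv.Perm ℝ where
  toFun := x0fun
  invFun := x0inv
  left_inv := by
    intro x
    simp only [x0fun, x0inv]
    split_ifs <;> linarith
  right_inv := by
    intro x
    simp only [x0fun, x0inv]
    split_ifs <;> linarith

/-- The underlying function of Thompson's generator `x₁`, extended by the
identity outside `[0,1]`. -/
def x1fun : ℝ → ℝ := fun α =>
  if α ≤ 1/2 then α
  else if α ≤ 5/8 then 2*α - 1/2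
  else if α ≤ 3/4 then α + 1/8
  else if α ≤ 1 then α/2 + 1/2
  else α

/-- The inverse of `x1fun`. -/
def x1inv : ℝ → ℝ := fun α =>
  if α ≤ 1/2 then α
  else if α ≤ 3/4 then α/2 + 1/4
  else if α ≤ 7/8 then α - 1/8
  else if α ≤ 1 then 2*α - 1
  else α

/-- Thompson's generator `x₁`, as a permutation of `ℝ` which is the identity
outside `[0,1]`:  `x₁ α = α` on `[0,1/2]`, `2α - 1/2` on `[1/2,5/8]`,
`α + 1/8` on `[5/8,3/4]`, and on `[3/4,1]` the affine map of slope `1/2`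
fixing `1` (written `α/2 + 3/4` in the source, an evident typo for
`α/2 + 1/2`, the unique slope-`1/2` affine map with `3/4 ↦ 7/8`, `1 ↦ 1`). -/
def x₁ : Equiv.Perm ℝ where
  toFun := x1fun
  invFun := x1inv
  left_inv := by
    intro x
    simp only [x1fun, x1inv]
    split_ifs <;> linarith
  right_inv := by
    intro x
    simp only [x1fun, x1inv]
    split_ifs <;> linarith

/-- `x₂ = x₀⁻¹ x₁ x₀` (maps written on the right), i.e. the map
`α ↦ x₀ (x₁ (x₀⁻¹ α))`; in terms of composition this is `x₀ * x₁ * x₀⁻¹`. -/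
def x₂ : Equiv.Perm ℝ := x₀ * x₁ * x₀⁻¹

/-- `b = x₁ x₂⁻¹` (maps written on the right), i.e. the map `α ↦ x₂⁻¹ (x₁ α)`. -/
def b : Equiv.Perm ℝ := x₂⁻¹ * x₁

/-- `a = x₀²`. -/
def a : Equiv.Perm ℝ := x₀ ^ 2


theorem a_apply (x : ℝ) : a x = x0fun (x0fun x) := rfl

theorem b_apply (x : ℝ) : b x = x0fun (x1inv (x0inv (x1fun x))) := rfl

theorem a_five_eighths : a (5/8) = 29/32 := by
  rw [a_apply]; norm_num [x0fun]

theorem b_five_eighths : b (5/8) = 3/4 := by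
  rw [b_apply]; norm_num [x0fun, x1inv, x0inv, x1fun]

theorem a_mapsTo {x : ℝ} (h : 7/8 ≤ x ∧ x ≤ 1) : 7/8 ≤ a x ∧ a x ≤ 1 := by
  obtain ⟨h₁, h₂⟩ := h
  have e : ∀ y : ℝ, 7/8 ≤ y → y ≤ 1 → x0fun y = y/2 + 1/2 := by
    intro y h₁ h₂
    simp only [x0fun]
    split_ifs <;> linarith
  rw [a_apply, e x h₁ h₂, e _ (by linarith) (by linarith)]
  constructor <;> linarith

theorem b_fixed {x : ℝ} (h : 7/8 ≤ x ∧ x ≤ 1) : b x = x := by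
  obtain ⟨h₁, h₂⟩ := h
  have e₁ : x1fun x = x/2 + 1/2 := by
    simp only [x1fun]
    split_ifs <;> linarith
  have e₂ : x0inv (x/2 + 1/2) = x := by
    simp only [x0inv]
    split_ifs <;> linarith
  have e₃ : x1inv x = 2*x - 1 := by
    simp only [x1inv]
    split_ifs <;> linarith
  rw [b_apply, e₁, e₂, e₃]
  simp only [x0fun]
  split_ifs <;> linarith

theorem b_mapsTo {x : ℝ} (h : 3/4 ≤ x ∧ x ≤ 7/8) : 3/4 ≤ b x ∧ b x ≤ 7/8 := by
  obtain ⟨h₁, h₂⟩ := h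
  have e₁ : x1fun x = x/2 + 1/2 := by
    simp only [x1fun]
    split_ifs <;> linarith
  have e₂ : x0inv (x/2 + 1/2) = x := by
    simp only [x0inv]
    split_ifs <;> linarith
  have e₃ : x1inv x = x - 1/8 := by
    simp only [x1inv]
    split_ifs <;> linarith
  have e₄ : x0fun (x - 1/8) = x/2 + 7/16 := by
    simp only [x0fun]
    split_ifs <;> linarith
  rw [b_apply, e₁, e₂, e₃, e₄]
  constructor <;> linarith

theorem a_pow_five_eighths (k : ℕ) :
    7/8 ≤ (a ^ (k + 1)) (5/8) ∧ (a ^ (k + 1)) (5/8) ≤ 1 := by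
  induction k with
  | zero => rw [zero_add, pow_one, a_five_eighths]; norm_num
  | succ k ih => rw [pow_succ', Equiv.Perm.mul_apply]; exact a_mapsTo ih

theorem b_pow_five_eighths (k : ℕ) :
    3/4 ≤ (b ^ (k + 1)) (5/8) ∧ (b ^ (k + 1)) (5/8) ≤ 7/8 := by
  induction k with
  | zero => rw [zero_add, pow_one, b_five_eighths]; norm_num
  | succ k ih => rw [pow_succ', Equiv.Perm.mul_apply]; exact b_mapsTo ih

theorem not_commute_pow (k : ℕ) : ¬ Commute (a ^ (k + 1)) (b ^ (k + 1)) := by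
  intro h
  have h₁ := congrArg (fun f : Equiv.Perm ℝ => f (5/8)) h.eq
  simp only [Equiv.Perm.mul_apply] at h₁
  rw [Equiv.Perm.pow_apply_eq_self_of_apply_eq_self (b_fixed (a_pow_five_eighths k))] at h₁
  have h₂ := (a ^ (k + 1)).injective h₁
  have h₃ := (b_pow_five_eighths k).1
  rw [h₂] at h₃
  norm_num at h₃

/-- for every nonzero integer `n`, the maps `aⁿ` and `bⁿ` do not
commute. -/
theorem pow_a_pow_b_not_commute (n : ℤ) (hn : n ≠ 0) :
    a ^ n * b ^ n ≠ b ^ n * a ^ n := by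
  intro h
  have hc : Commute (a ^ n) (b ^ n) := h
  obtain ⟨k, hk⟩ := Nat.exists_eq_succ_of_ne_zero (Int.natAbs_ne_zero.mpr hn)
  apply not_commute_pow k
  rw [← Nat.succ_eq_add_one, ← hk]
  rcases Int.natAbs_eq n with e | e
  · rw [e, zpow_natCast, zpow_natCast] at hc
    exact hc
  · rw [e, zpow_neg, zpow_neg, zpow_natCast, zpow_natCast] at hc
    exact Commute.inv_inv_iff.mp hc
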